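/- arXiv:2411.16126 — 2 statements merged into one kernel-verified Lean document; each statement's English description precedes it below -/
import Mathlib

section
/- Let n be a natural number, s : Fin n → ℝ, and a b : ℝ with 0 < a, a ≤ 1 ≤ b, and a ≤ s i ≤ b for all i. Let X ⊆ EuclideanSpace ℝ (Fin n) be a bounded set. Then for all p, q ∈ X, the perturbation of the filtration value satisfies |dist (S p) (S q) - dist p q| ≤ (b - a) * diam X. (This is the bound Δε ≤ (s_max - s_min) · diam(X) on the perturbation of the Vietoris–Rips filtration parameter used in Theorem 3.1.) -/
/-! Coordinatewise, `a |pᵢ - qᵢ| ≤ |sᵢ (pᵢ - qᵢ)| ≤ b |pᵢ - qᵢ|`, so `S` distorts distances by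
a factor in `[a, b]`. Since `1` also lies in `[a, b]`, the perturbation is at most
`(b - a) * dist p q`, and `dist p q ≤ diam X` because `X` is bounded. -/

/-- Perturbation of the Vietoris–Rips filtration parameter:
`|dist (S p) (S q) - dist p q| ≤ (b - a) * diam X` for `p, q ∈ X`. -/
theorem filtration_perturbation_bound {n : ℕ} (s : Fin n → ℝ) (a b : ℝ)
    (ha : 0 < a) (ha1 : a ≤ 1) (hb1 : 1 ≤ b)
    (hs : ∀ i, a ≤ s i ∧ s i ≤ b)
    (S : EuclideanSpace ℝ (Fin n) → EuclideanSpace ℝ (Fin n))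
    (hS : ∀ x i, S x i = s i * x i)
    (X : Set (EuclideanSpace ℝ (Fin n))) (hX : Bornology.IsBounded X)
    (p q : EuclideanSpace ℝ (Fin n)) (hp : p ∈ X) (hq : q ∈ X) :
    |dist (S p) (S q) - dist p q| ≤ (b - a) * Metric.diam X := by
  have hb : 0 ≤ b := zero_le_one.trans hb1
  have hterm : ∀ i, dist (S p i) (S q i) ^ 2 = s i ^ 2 * dist (p i) (q i) ^ 2 := fun i => by
    rw [hS, hS, Real.dist_eq, Real.dist_eq, sq_abs, sq_abs]
    ring
  have hupper : dist (S p) (S q) ≤ b * dist p q := by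
    refine (sq_le_sq₀ (by positivity) (by positivity)).1 ?_
    rw [mul_pow, EuclideanSpace.dist_sq_eq, EuclideanSpace.dist_sq_eq, Finset.mul_sum]
    refine Finset.sum_le_sum fun i _ => ?_
    rw [hterm]
    have := ha.le.trans (hs i).1
    have := (hs i).2
    gcongr
  have hlower : a * dist p q ≤ dist (S p) (S q) := by
    refine (sq_le_sq₀ (by positivity) (by positivity)).1 ?_
    rw [mul_pow, EuclideanSpace.dist_sq_eq, EuclideanSpace.dist_sq_eq, Finset.mul_sum]
    refine Finset.sum_le_sum fun i _ => ?_
    rw [hterm]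
    have := (hs i).1
    gcongr
  have hd : 0 ≤ dist p q := dist_nonneg
  calc |dist (S p) (S q) - dist p q| ≤ (b - a) * dist p q := by
        rw [abs_le]
        constructor <;> nlinarith
    _ ≤ (b - a) * Metric.diam X :=
        mul_le_mul_of_nonneg_left (Metric.dist_le_diam_of_mem hX hp hq) (by linarith)
end

section
/- Let n be a natural number, s : Fin n → ℝ with s i > 0 for all i, and let M : ℝ satisfy |s i - 1| ≤ M for all i. Then for every bounded set X ⊆ EuclideanSpace ℝ (Fin n), the change in diameter under scaling satisfies |diam (S '' X) - diam X| ≤ M * diam X. -/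
/-!
Scaling displaces the difference `x - y` by the vector with coordinates `(s i - 1) * (x i - y i)`,
whose norm is at most `M * dist x y`. Hence `dist (S x) (S y)` and `dist x y` differ by at most
`M * dist x y ≤ M * diam X`, and passing to suprema in both directions gives the bound.
For `n = 0`, where `M` may be negative, both diameters vanish.
-/

/-- The distance version of the bound; `0 ≤ M` is not automatic when `n = 0`. -/
lemma abs_dist_scaling_sub_dist_le {n : ℕ} (s : Fin n → ℝ) (M : ℝ) (hM0 : 0 ≤ M)
    (hM : ∀ i, |s i - 1| ≤ M)
    (S : EuclideanSpace ℝ (Fin n) → EuclideanSpace ℝ (Fin n))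
    (hS : ∀ x i, S x i = s i * x i) (x y : EuclideanSpace ℝ (Fin n)) :
    |dist (S x) (S y) - dist x y| ≤ M * dist x y := by
  rw [dist_eq_norm, dist_eq_norm]
  refine (abs_norm_sub_norm_le _ _).trans ?_
  refine le_of_sq_le_sq ?_ (by positivity)
  rw [mul_pow, EuclideanSpace.real_norm_sq_eq, EuclideanSpace.real_norm_sq_eq, Finset.mul_sum]
  refine Finset.sum_le_sum fun i _ => ?_
  have h : (S x - S y - (x - y)) i = (s i - 1) * (x - y) i := by
    simp only [PiLp.sub_apply, hS]
    ring
  rw [h, mul_pow]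
  exact mul_le_mul_of_nonneg_right (sq_le_sq.2 ((hM i).trans (le_abs_self M))) (sq_nonneg _)

/-- If `|s i - 1| ≤ M` for all `i`, then for any bounded set `X` the change in diameter
under scaling satisfies `|diam (S '' X) - diam X| ≤ M * diam X`. -/
theorem diam_change_under_scaling {n : ℕ} (s : Fin n → ℝ) (hs : ∀ i, 0 < s i)
    (M : ℝ) (hM : ∀ i, |s i - 1| ≤ M)
    (S : EuclideanSpace ℝ (Fin n) → EuclideanSpace ℝ (Fin n))
    (hS : ∀ x i, S x i = s i * x i)
    (X : Set (EuclideanSpace ℝ (Fin n))) (hX : Bornology.IsBounded X) :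
    |Metric.diam (S '' X) - Metric.diam X| ≤ M * Metric.diam X := by
  rcases Nat.eq_zero_or_pos n with rfl | hn
  · rw [Metric.diam_subsingleton (Set.subsingleton_of_subsingleton (s := X)),
      Metric.diam_subsingleton (Set.subsingleton_of_subsingleton (s := S '' X))]
    simp
  have hM0 : 0 ≤ M := (abs_nonneg _).trans (hM ⟨0, hn⟩)
  have hdiam : 0 ≤ Metric.diam X := Metric.diam_nonneg
  have key : ∀ x ∈ X, ∀ y ∈ X, |dist (S x) (S y) - dist x y| ≤ M * Metric.diam X :=
    fun x hx y hy => (abs_dist_scaling_sub_dist_le s M hM0 hM S hS x y).trans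
      (mul_le_mul_of_nonneg_left (Metric.dist_le_diam_of_mem hX hx hy) hM0)
  have upper : ∀ a ∈ S '' X, ∀ b ∈ S '' X, dist a b ≤ Metric.diam X + M * Metric.diam X := by
    rintro _ ⟨x, hx, rfl⟩ _ ⟨y, hy, rfl⟩
    linarith [(abs_le.1 (key x hx y hy)).2, Metric.dist_le_diam_of_mem hX hx hy]
  -- Boundedness of the image makes its real-valued diameter a genuine upper bound.
  have hSX : Bornology.IsBounded (S '' X) :=
    Metric.isBounded_iff.2 ⟨_, fun a ha b hb => upper a ha b hb⟩
  have h₁ : Metric.diam (S '' X) ≤ Metric.diam X + M * Metric.diam X :=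
    Metric.diam_le_of_forall_dist_le (by positivity) upper
  have h₂ : Metric.diam X ≤ Metric.diam (S '' X) + M * Metric.diam X := by
    refine Metric.diam_le_of_forall_dist_le
      (add_nonneg Metric.diam_nonneg (by positivity)) fun x hx y hy => ?_
    linarith [(abs_le.1 (key x hx y hy)).1, Metric.dist_le_diam_of_mem hSX
      (Set.mem_image_of_mem S hx) (Set.mem_image_of_mem S hy)]
  exact abs_le.2 ⟨by linarith, by linarith⟩
end
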